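/- Let R be a semi-local unital ring with two orthogonal Morita-equivalent idempotents e₁, e₂ summing to 1. Then every g ∈ GL(1, R) = R* admits a Gauss decomposition: g ∈ T₁₂·T₂₁·T₁₂·D, where T₁₂ = {1 + a : a ∈ e₁Re₂}, T₂₁ = {1 + b : b ∈ e₂Re₁}, and D = {h ∈ R* : e₁he₂ = e₂he₁ = 0} is the diagonal subgroup. -/

import Mathlib

/-- The two-sided ideal `R·a·R` generated by `a` in a unital ring `R`,
as an additive subgroup: the additive closure of all products `r * a * s`. -/
def idealGen (R : Type*) [Ring R] (a : R) : AddSubgroup R :=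
  AddSubgroup.closure {x : R | ∃ r s : R, x = r * a * s}

/-!
Let `gᵢⱼ = eᵢ g eⱼ` be the Peirce blocks of `g` and `g'ᵢⱼ` those of `g⁻¹`. The identity
`g'₁₁ g₁₁ + g'₁₂ g₂₁ = 1` in `e₁ R e₁` shows that `g₁₁` and `g'₁₂ g₂₁` generate the unit left ideal
there, so if `e₁ R e₁` has stable range one, then some `g₁₁ + t g'₁₂ g₂₁` is invertible. This is the
upper left block of `(1 + t g'₁₂) g`, and a matrix whose upper left block is invertible is a lower
unitriangular times an upper unitriangular times a diagonal one.

A semilocal ring has stable range one (Bass): units lift along `R → R / Jac R`, the quotient is a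
product of matrix rings over division rings, and for these the claim is dimension counting. Stable
range one passes to corners (Vaserstein).
-/

/-- Stable range one in Bass's sense: whenever `x` and `y` generate the unit left ideal, some
`x + t * y` is invertible. Over a ring the version for right ideals is equivalent (Vaserstein). -/
def HasStableRangeOne (R : Type*) [Semiring R] : Prop :=
  ∀ ⦃a b x y : R⦄, a * x + b * y = 1 → ∃ t, IsUnit (x + t * y)

section StableRange

theorem HasStableRangeOne.of_surjective {R S F : Type*} [Semiring R] [Semiring S]
    [FunLike F R S] [RingHomClass F R S] (hS : HasStableRangeOne S) (φ : F) [IsLocalHom φ]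
    (hφ : Function.Surjective φ) :
    HasStableRangeOne R := by
  intro a b x y hab
  obtain ⟨t, ht⟩ : ∃ t, IsUnit (φ x + t * φ y) :=
    hS (by rw [← map_mul, ← map_mul, ← map_add, hab, map_one] : φ a * φ x + φ b * φ y = 1)
  obtain ⟨t, rfl⟩ := hφ t
  exact ⟨t, isUnit_of_map_unit φ _ (by rwa [map_add, map_mul])⟩

theorem HasStableRangeOne.pi {ι : Type*} {R : ι → Type*} [∀ i, Semiring (R i)]
    (h : ∀ i, HasStableRangeOne (R i)) : HasStableRangeOne (∀ i, R i) := by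
  intro a b x y hab
  choose t ht using fun i ↦ h i (congrFun hab i)
  exact ⟨t, Pi.isUnit_iff.mpr ht⟩

open LinearMap in
theorem exists_bijective_add_comp {D U V W : Type*} [DivisionRing D]
    [AddCommGroup U] [Module D U] [AddCommGroup V] [Module D V] [AddCommGroup W] [Module D W]
    [FiniteDimensional D V] [FiniteDimensional D W]
    (hVW : Module.finrank D V = Module.finrank D W)
    (f : V →ₗ[D] W) (h : U →ₗ[D] W) (hfh : range f ⊔ range h = ⊤) :
    ∃ k : V →ₗ[D] U, Function.Bijective (f + h ∘ₗ k) := by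
  -- An isomorphism from the kernel of `f` to its cokernel, lifted through `h`, repairs `f`.
  let q := (range f).mkQ
  have hqf (v : V) : q (f v) = 0 := by simp [q]
  obtain ⟨σ, hσ⟩ : ∃ σ, (q ∘ₗ h) ∘ₗ σ = LinearMap.id :=
    (q ∘ₗ h).exists_rightInverse_of_surjective <| by
      rwa [range_comp, Submodule.map_mkQ_eq_top]
  obtain ⟨p, hp⟩ := (ker f).subtype.exists_leftInverse_of_injective (Submodule.ker_subtype _)
  have hdim : Module.finrank D (ker f) = Module.finrank D (W ⧸ range f) := by
    have h₁ := f.finrank_range_add_finrank_ker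
    have h₂ := (range f).finrank_quotient_add_finrank
    lia
  let φ : V →ₗ[D] W ⧸ range f := LinearEquiv.ofFinrankEq _ _ hdim ∘ₗ p
  have hφ (v : V) (hv : f v = 0) (hφv : φ v = 0) : v = 0 := by
    have hpv : p v = ⟨v, hv⟩ := LinearMap.congr_fun hp ⟨v, hv⟩
    simpa [φ, hpv, ← Subtype.val_inj] using hφv
  have hinj : Function.Injective (f + h ∘ₗ σ ∘ₗ φ) := by
    refine (injective_iff_map_eq_zero _).mpr fun v hv ↦ ?_
    replace hv : f v + h (σ (φ v)) = 0 := hv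
    have hφv : φ v = 0 := calc
      φ v = q (h (σ (φ v))) := (LinearMap.congr_fun hσ (φ v)).symm
      _ = q (f v + h (σ (φ v))) := by rw [map_add, hqf, zero_add]
      _ = 0 := by rw [hv, map_zero]
    exact hφ v (by simpa [hφv] using hv) hφv
  exact ⟨σ ∘ₗ φ, hinj, (injective_iff_surjective_of_finrank_eq_finrank hVW).mp hinj⟩

open MulOpposite LinearMap in
theorem hasStableRangeOne_end_mulOpposite (D V : Type*) [DivisionRing D] [AddCommGroup V]
    [Module D V] [FiniteDimensional D V] : HasStableRangeOne (Module.End D V)ᵐᵒᵖ := by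
  intro a b x y hab
  have hrange : range (unop x) ⊔ range (unop y) = ⊤ := by
    refine eq_top_iff.mpr fun v _ ↦ Submodule.mem_sup.mpr
      ⟨_, ⟨unop a v, rfl⟩, _, ⟨unop b v, rfl⟩, ?_⟩
    exact LinearMap.congr_fun (congrArg unop hab) v
  obtain ⟨k, hk⟩ := exists_bijective_add_comp rfl _ _ hrange
  exact ⟨op k, isUnit_unop.mp ((Module.End.isUnit_iff _).mpr hk)⟩

theorem HasStableRangeOne.of_isSemisimpleRing (R : Type*) [Ring R] [IsSemisimpleRing R] :
    HasStableRangeOne R := by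
  obtain ⟨n, D, d, _, _, ⟨E⟩⟩ := IsSemisimpleRing.exists_ringEquiv_pi_matrix_divisionRing R
  refine .of_surjective (.pi fun i ↦ ?_) E E.surjective
  let F := matrixRingEquivEndVecMulOpposite (ι := Fin (d i)) (A := D i)
  exact (hasStableRangeOne_end_mulOpposite (D i) (Fin (d i) → D i)).of_surjective
    F F.surjective

theorem isLocalHom_mk'_of_le_jacobson {R : Type*} [Ring R] {I : TwoSidedIdeal R}
    (hI : I ≤ (⊥ : TwoSidedIdeal R).jacobson) : IsLocalHom I.ringCon.mk' := by
  let π := I.ringCon.mk'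
  have exists_left_inv (z : R) (hz : IsUnit (π z)) : ∃ w, w * z = 1 := by
    obtain ⟨v, hv⟩ := I.ringCon.mk'_surjective ↑hz.unit⁻¹
    have hvz : v * z - 1 ∈ I := by
      rw [← TwoSidedIdeal.ker_ringCon_mk' I, TwoSidedIdeal.mem_ker, map_sub, map_mul, map_one, hv,
        hz.val_inv_mul, sub_self]
    obtain ⟨s, hs⟩ := Ideal.exists_mul_sub_mem_of_sub_one_mem_jacobson (v * z) <| by
      simpa only [← TwoSidedIdeal.mem_asIdeal, TwoSidedIdeal.asIdeal_jacobson] using hI hvz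
    exact ⟨s * v, by rwa [TwoSidedIdeal.bot_asIdeal, Ideal.mem_bot, sub_eq_zero, ← mul_assoc] at hs⟩
  refine ⟨fun u hu ↦ ?_⟩
  obtain ⟨v, hvu⟩ := exists_left_inv u hu
  have hv : IsUnit (π v) := by
    rw [← hu.mul_right_iff, ← map_mul, hvu, map_one]
    exact isUnit_one
  obtain ⟨w, hwv⟩ := exists_left_inv v hv
  exact isUnit_iff_exists.mpr ⟨v, left_inv_eq_right_inv hwv hvu ▸ hwv, hvu⟩

theorem HasStableRangeOne.of_isSemisimpleRing_quotient_jacobson (R : Type*) [Ring R]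
    [IsSemisimpleRing (⊥ : TwoSidedIdeal R).jacobson.ringCon.Quotient] :
    HasStableRangeOne R :=
  have := isLocalHom_mk'_of_le_jacobson (le_refl (⊥ : TwoSidedIdeal R).jacobson)
  (of_isSemisimpleRing _).of_surjective (⊥ : TwoSidedIdeal R).jacobson.ringCon.mk'
    (RingCon.mk'_surjective _)

end StableRange

section Peirce

variable {R : Type*} [Ring R] {e f : R}

/-- The elementary unit `1 + e * r * f`, for `f * e = 0`; for complementary idempotents these form
the group `T₁₂` of the Peirce decomposition (and `T₂₁` with `e` and `f` exchanged). -/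
def peirceTransvection (hfe : f * e = 0) (r : R) : Rˣ where
  val := 1 + e * r * f
  inv := 1 - e * r * f
  val_inv := by
    linear_combination (norm := noncomm_ring) -(e * r) * hfe * (r * f)
  inv_val := by
    linear_combination (norm := noncomm_ring) -(e * r) * hfe * (r * f)

/-- The upper left Peirce block `e * x * e` of `x`, as an element of the corner ring `e R e`. -/
def peirceBlock (he : IsIdempotentElem e) (x : R) : he.Corner := ⟨e * x * e, x, rfl⟩

theorem isUnit_corner_of_isUnit_add_one_sub (he : IsIdempotentElem e) {z : he.Corner}
    (hz : IsUnit (z.1 + (1 - e))) : IsUnit z := by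
  obtain ⟨hez, hze⟩ := (Subsemigroup.mem_corner_iff he).mp z.2
  obtain ⟨v, hv, hv'⟩ := isUnit_iff_exists.mp hz
  refine isUnit_iff_exists.mpr ⟨peirceBlock he v, Subtype.ext ?_, Subtype.ext ?_⟩
  · calc z.1 * (e * v * e) = z.1 * e * v * e := by simp only [mul_assoc]
      _ = e * (z.1 + (1 - e)) * v * e := by
        rw [hze, mul_add, hez, he.mul_one_sub_self, add_zero]
      _ = e := by rw [mul_assoc e, hv, mul_one, he.eq]
  · calc e * v * e * z.1 = e * v * (e * z.1) := by simp only [mul_assoc]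
      _ = e * v * ((z.1 + (1 - e)) * e) := by
        rw [hez, add_mul, hze, he.one_sub_mul_self, add_zero]
      _ = e := by rw [← mul_assoc, mul_assoc e, hv', mul_one, he.eq]

theorem HasStableRangeOne.corner (hR : HasStableRangeOne R) (he : IsIdempotentElem e) :
    HasStableRangeOne he.Corner := by
  intro a b x y hab
  obtain ⟨-, hae⟩ := (Subsemigroup.mem_corner_iff he).mp a.2
  obtain ⟨hex, hxe⟩ := (Subsemigroup.mem_corner_iff he).mp x.2
  obtain ⟨hey, hye⟩ := (Subsemigroup.mem_corner_iff he).mp y.2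
  have hab' : (a.1 + (1 - e)) * (x.1 + (1 - e)) + b.1 * y.1 = 1 := by
    have hab : a.1 * x.1 + b.1 * y.1 = e := congrArg Subtype.val hab
    linear_combination (norm := noncomm_ring) hab - hae - hex + he.eq
  obtain ⟨t, ht⟩ := hR hab'
  refine ⟨peirceBlock he t, isUnit_corner_of_isUnit_add_one_sub he ?_⟩
  -- `T⁻¹` clears the part `(1 - e) * t * y` of the unit that lies outside the corner.
  let T := peirceTransvection he.mul_one_sub_self (t * y.1)
  have hz : (x.1 + (1 - e) + t * y.1) * (1 - e) = 1 - e := by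
    linear_combination (norm := noncomm_ring) -hxe - t * hye + he.eq
  have hT : x.1 + e * t * e * y.1 + (1 - e) = (x.1 + (1 - e) + t * y.1) * ↑T⁻¹ := calc
    x.1 + e * t * e * y.1 + (1 - e)
        = x.1 + (1 - e) + t * y.1 - (1 - e) * (t * (y.1 * e)) := by
      rw [mul_assoc _ e, hey, hye]; noncomm_ring
    _ = x.1 + (1 - e) + t * y.1
        - (x.1 + (1 - e) + t * y.1) * (1 - e) * (t * (y.1 * e)) := by rw [hz]
    _ = (x.1 + (1 - e) + t * y.1) * (1 - (1 - e) * (t * y.1) * e) := by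
      noncomm_ring
  exact (congrArg IsUnit hT).mpr (ht.mul T⁻¹.isUnit)

theorem exists_isUnit_peirceBlock_inv_mul (he : IsIdempotentElem e) (hef : e + f = 1)
    (hfe : f * e = 0) (hR : HasStableRangeOne he.Corner) (g : Rˣ) :
    ∃ t, IsUnit (peirceBlock he ↑((peirceTransvection hfe t)⁻¹ * g)) := by
  have hgen : peirceBlock he ↑g⁻¹ * peirceBlock he g + 1 * peirceBlock he (↑g⁻¹ * f * g) = 1 := by
    rw [one_mul]
    refine Subtype.ext ?_
    calc e * ↑g⁻¹ * e * (e * g * e) + e * (↑g⁻¹ * f * g) * e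
        = e * ↑g⁻¹ * (e * e + f) * g * e := by noncomm_ring
      _ = e := by rw [he.eq, hef, mul_one, mul_assoc e, g.inv_mul, mul_one, he.eq]
  obtain ⟨t, ht⟩ := hR hgen
  obtain ⟨het, hte⟩ := (Subsemigroup.mem_corner_iff he).mp t.2
  refine ⟨-(t.1 * ↑g⁻¹), ?_⟩
  convert ht using 1
  refine Subtype.ext ?_
  calc e * ((1 - e * -(t.1 * ↑g⁻¹) * f) * g) * e
      = e * g * e + e * e * t.1 * ↑g⁻¹ * f * g * e := by noncomm_ring
    _ = e * g * e + t.1 * e * ↑g⁻¹ * f * g * e := by rw [he.eq, het, hte]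
    _ = e * g * e + t.1 * (e * (↑g⁻¹ * f * g) * e) := by simp only [mul_assoc]

theorem exists_eq_peirceTransvection_mul_upperTriangular (he : IsIdempotentElem e)
    (hef : e + f = 1) (hef' : e * f = 0) (hfe : f * e = 0) {x : Rˣ}
    (hx : IsUnit (peirceBlock he x)) :
    ∃ (s : R) (y : Rˣ), f * y * e = 0 ∧ f * ↑y⁻¹ * e = 0 ∧ x = peirceTransvection hef' s * y := by
  obtain ⟨w, hw, hw'⟩ := isUnit_iff_exists.mp hx
  replace hw : e * x * e * w.1 = e := congrArg Subtype.val hw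
  replace hw' : w.1 * (e * x * e) = e := congrArg Subtype.val hw'
  obtain ⟨hew, hwe⟩ := (Subsemigroup.mem_corner_iff he).mp w.2
  have hf : IsIdempotentElem f := (IsIdempotentElem.of_mul_add hfe (add_comm e f ▸ hef)).1
  refine ⟨x * w.1, (peirceTransvection hef' (x * w.1))⁻¹ * x, ?_, ?_, by group⟩
  · calc f * ((1 - f * (x * w.1) * e) * x) * e
        = f * x * e - f * f * x * (w.1 * e) * x * e := by noncomm_ring
      _ = f * x * e - f * x * (w.1 * (e * x * e)) := by
        rw [hwe, hf.eq]; nth_rw 1 [← hwe]; simp only [mul_assoc]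
      _ = 0 := by rw [hw', sub_self]
  · have hinv : ↑x⁻¹ * (1 + f * (x * w.1) * e) * e = w.1 := calc
      ↑x⁻¹ * (1 + f * (x * w.1) * e) * e
          = ↑x⁻¹ * (e * x * e * w.1 + f * x * w.1) := by
        rw [hw]; simp only [mul_add, add_mul, mul_assoc, mul_one, hwe]
      _ = ↑x⁻¹ * ((e + f) * x * w.1) := by rw [mul_assoc _ e w.1, hew]; noncomm_ring
      _ = w.1 := by rw [hef, one_mul, x.inv_mul_cancel_left]
    calc f * ↑((peirceTransvection hef' (x * w.1))⁻¹ * x)⁻¹ * e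
        = f * (↑x⁻¹ * (1 + f * (x * w.1) * e) * e) := by
          rw [mul_inv_rev, inv_inv, mul_assoc]; rfl
      _ = 0 := by rw [hinv, ← hew, ← mul_assoc, hfe, zero_mul]

theorem exists_eq_peirceTransvection_mul_diagonal (hef : e + f = 1) (hfe : f * e = 0)
    {x : Rˣ} (hx : f * x * e = 0) (hx' : f * ↑x⁻¹ * e = 0) :
    ∃ (r : R) (h : Rˣ), e * h * f = 0 ∧ f * h * e = 0 ∧ x = peirceTransvection hfe r * h := by
  obtain ⟨hf, he⟩ := IsIdempotentElem.of_mul_add hfe (add_comm e f ▸ hef)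
  have hfx : f * ↑x⁻¹ * f = f * ↑x⁻¹ := by
    rw [← add_zero (_ * f), ← hx', ← mul_add, add_comm, hef, mul_one]
  refine ⟨x * f * ↑x⁻¹, (peirceTransvection hfe (x * f * ↑x⁻¹))⁻¹ * x, ?_, ?_, by group⟩
  · calc e * ((1 - e * (x * f * ↑x⁻¹) * f) * x) * f
        = e * x * f - e * e * x * (f * ↑x⁻¹ * f) * x * f := by noncomm_ring
      _ = e * x * f - e * x * (f * (↑x⁻¹ * x) * f) := by
        rw [hfx, he.eq]; simp only [mul_assoc]
      _ = 0 := by rw [x.inv_mul, mul_one, hf.eq, sub_self]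
  · calc f * ((1 - e * (x * f * ↑x⁻¹) * f) * x) * e
        = f * x * e - (f * e) * (x * f * ↑x⁻¹) * (f * x * e) := by noncomm_ring
      _ = 0 := by rw [hx, mul_zero, sub_zero]

end Peirce

theorem stmt15_general {R : Type*} [Ring R] {e₁ e₂ : R} (he₁ : IsIdempotentElem e₁)
    (hsum : e₁ + e₂ = 1) (hsr : HasStableRangeOne he₁.Corner) :
    ∀ g : Rˣ, ∃ r r' s : R, ∃ h : Rˣ,
      e₁ * h.val * e₂ = 0 ∧ e₂ * h.val * e₁ = 0 ∧
      g.val = (1 + e₁ * r * e₂) * (1 + e₂ * s * e₁) * (1 + e₁ * r' * e₂) * h.val := by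
  intro g
  have he₂ : e₂ = 1 - e₁ := eq_sub_of_add_eq' hsum
  have h12 : e₁ * e₂ = 0 := he₂ ▸ he₁.mul_one_sub_self
  have h21 : e₂ * e₁ = 0 := he₂ ▸ he₁.one_sub_mul_self
  obtain ⟨r, hr⟩ := exists_isUnit_peirceBlock_inv_mul he₁ hsum h21 hsr g
  obtain ⟨s, y, hy, hy', hgy⟩ :=
    exists_eq_peirceTransvection_mul_upperTriangular he₁ hsum h12 h21 hr
  obtain ⟨r', h, hh12, hh21, hyh⟩ := exists_eq_peirceTransvection_mul_diagonal hsum h21 hy hy'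
  refine ⟨r, r', s, h, hh12, hh21, congrArg Units.val (?_ : g = peirceTransvection h21 r *
    peirceTransvection h12 s * peirceTransvection h21 r' * h)⟩
  rw [mul_assoc, ← hyh, mul_assoc, ← hgy, mul_inv_cancel_left]

theorem stmt15 {R : Type*} [Ring R]
    -- `R` is semi-local: `R / Jac(R)` is semisimple
    (hsl : IsSemisimpleRing ((⊥ : TwoSidedIdeal R).jacobson.ringCon.Quotient))
    (e₁ e₂ : R) (he₁ : IsIdempotentElem e₁) (he₂ : IsIdempotentElem e₂)
    (hsum : e₁ + e₂ = 1) (h12 : e₁ * e₂ = 0) (h21 : e₂ * e₁ = 0)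
    -- Morita equivalence of `e₁` and `e₂`
    (hm₁ : e₁ ∈ idealGen R e₂) (hm₂ : e₂ ∈ idealGen R e₁) :
    ∀ g : Rˣ, ∃ r r' s : R, ∃ h : Rˣ,
      e₁ * h.val * e₂ = 0 ∧ e₂ * h.val * e₁ = 0 ∧
      g.val = (1 + e₁ * r * e₂) * (1 + e₂ * s * e₁) * (1 + e₁ * r' * e₂) * h.val :=
  stmt15_general he₁ hsum ((HasStableRangeOne.of_isSemisimpleRing_quotient_jacobson R).corner he₁)
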